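/- arXiv:2207.11799 — 2 statements merged into one kernel-verified Lean document; each statement's English description precedes it below -/
import Mathlib

section
/- Left bilinearity of the Poincaré bundle: there is a unique map Φ_l, defined on pairs (p, q) ∈ P × P with π₂(p) = π₂(q), such that Φ_l([a, c, t], [b, c, s]) = [a + b, c, s + t] for all a, b, c ∈ ℝⁿ and s, t ∈ T. It satisfies π₁(Φ_l(p,q)) = π₁(p) + π₁(q), π₂(Φ_l(p,q)) = π₂(p), the balancing relations Φ_l(p + z, q) = Φ_l(p, q) + z = Φ_l(p, q + z) for z ∈ T, and associativity: Φ_l(Φ_l(p, q), r) = Φ_l(p, Φ_l(q, r)) whenever π₂(p) = π₂(q) = π₂(r). -/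
/-!
Two points of `P` lie over the same point of the second torus exactly when they have
representatives `(a, c, t)` and `(b, c, s)` with a common second coordinate `c`
(`exists_common_rep`): if the second coordinates differ by an integer vector `k`, translating
by `(0, k)` aligns them without changing the circle coordinate. This gives uniqueness of `Φ_l`
and reduces every identity to a computation on representatives.

Existence amounts to independence of the representatives (`mk3_add_congr`). Since the Poincaré
relation is an equivalence relation, equality of classes gives
`(a', c', t') = (a + m, c + k, t + m⋅c)` and `(b', c', s') = (b + l, c + k', s + l⋅c)`; then the
circle coordinate of the product changes by `m⋅c + l⋅c = (m + l)⋅c`, as it should, because the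
cocycle `m⋅c` is additive in `m`.
-/

open Matrix

noncomputable section

/-- The circle `T = ℝ/ℤ`. -/
abbrev Tc : Type := AddCircle (1 : ℝ)

/-- Componentwise inclusion `ℤⁿ → ℝⁿ`. -/
def zc {n : ℕ} (m : Fin n → ℤ) : Fin n → ℝ := fun i => (m i : ℝ)

/-- The Poincaré relation on `ℝⁿ × ℝⁿ × T`:
`(a,â,t) ~ (a+m, â+m̂, t+↑(m⋅â))` for `m, m̂ ∈ ℤⁿ`. -/
def PoincareRel (n : ℕ) (p q : (Fin n → ℝ) × (Fin n → ℝ) × Tc) : Prop :=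
  ∃ m mhat : Fin n → ℤ,
    q.1 = p.1 + zc m ∧ q.2.1 = p.2.1 + zc mhat ∧
      q.2.2 = p.2.2 + ((dotProduct (zc m) p.2.1 : ℝ) : Tc)

/-- The total space `P` of the Poincaré bundle: the quotient of `ℝⁿ × ℝⁿ × T`
by the Poincaré relation. -/
def PB (n : ℕ) : Type := Quot (PoincareRel n)

/-- The class `[a, â, t]` in `P`. -/
def mk3 {n : ℕ} (a ahat : Fin n → ℝ) (t : Tc) : PB n := Quot.mk _ (a, ahat, t)

/-- The circle action on `P`: `[a, â, t] + s := [a, â, t + s]` (well defined). -/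
def PBadd {n : ℕ} (p : PB n) (s : Tc) : PB n :=
  Quot.lift (fun q => mk3 q.1 q.2.1 (q.2.2 + s))
    (fun r r' h => by
      obtain ⟨m, mhat, h1, h2, h3⟩ := h
      refine Quot.sound ⟨m, mhat, h1, h2, ?_⟩
      show r'.2.2 + s = r.2.2 + s + ((dotProduct (zc m) r.2.1 : ℝ) : Tc)
      rw [h3]; abel)
    p

lemma coe_int_eq_zero (k : ℤ) : ((k : ℝ) : Tc) = 0 :=
  (AddCircle.coe_eq_zero_iff (1 : ℝ)).mpr ⟨k, by simp⟩

/-- Projection `π₁ : P → Tⁿ` remembering the first `ℝⁿ`-coordinate. -/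
def proj1 {n : ℕ} : PB n → (Fin n → Tc) :=
  Quot.lift (fun p => fun i => ((p.1 i : ℝ) : Tc))
    (fun r r' h => by
      obtain ⟨m, mhat, h1, h2, h3⟩ := h
      show (fun i => ((r.1 i : ℝ) : Tc)) = fun i => ((r'.1 i : ℝ) : Tc)
      funext i
      have hq : r'.1 i = r.1 i + (m i : ℝ) := by rw [h1]; rfl
      rw [hq, AddCircle.coe_add, coe_int_eq_zero, add_zero])

/-- Projection `π₂ : P → Tⁿ` remembering the second `ℝⁿ`-coordinate. -/
def proj2 {n : ℕ} : PB n → (Fin n → Tc) :=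
  Quot.lift (fun p => fun i => ((p.2.1 i : ℝ) : Tc))
    (fun r r' h => by
      obtain ⟨m, mhat, h1, h2, h3⟩ := h
      show (fun i => ((r.2.1 i : ℝ) : Tc)) = fun i => ((r'.2.1 i : ℝ) : Tc)
      funext i
      have hq : r'.2.1 i = r.2.1 i + (mhat i : ℝ) := by rw [h2]; rfl
      rw [hq, AddCircle.coe_add, coe_int_eq_zero, add_zero])

/-- The defining property of the left multiplication `Φ_l` of the Poincaré bundle,
defined on pairs with equal second projection:
`Φ_l([a, c, t], [b, c, s]) = [a + b, c, s + t]`. -/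
def IsPhiL (n : ℕ) (Phi : (p : PB n) → (q : PB n) → proj2 p = proj2 q → PB n) : Prop :=
  ∀ (a b c : Fin n → ℝ) (t s : Tc) (h : proj2 (mk3 a c t) = proj2 (mk3 b c s)),
    Phi (mk3 a c t) (mk3 b c s) h = mk3 (a + b) c (s + t)

lemma zc_add {n : ℕ} (m l : Fin n → ℤ) : zc (m + l) = zc m + zc l := by
  funext i; simp [zc]

lemma zc_neg {n : ℕ} (m : Fin n → ℤ) : zc (-m) = -zc m := by
  funext i; simp [zc]

lemma zc_zero {n : ℕ} : zc (0 : Fin n → ℤ) = 0 := by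
  funext i; simp [zc]

/-- The pairing of integer vectors vanishes in the circle; hence `m⋅c` modulo `ℤ` depends on `c`
only modulo `ℤⁿ`. -/
lemma coe_zc_dot_zc {n : ℕ} (m k : Fin n → ℤ) :
    ((dotProduct (zc m) (zc k) : ℝ) : Tc) = 0 := by
  have h : dotProduct (zc m) (zc k) = ((dotProduct m k : ℤ) : ℝ) := by
    simp [dotProduct, zc]
  rw [h, coe_int_eq_zero]

lemma poincareRel_equivalence (n : ℕ) : Equivalence (PoincareRel n) where
  refl p := ⟨0, 0, by simp [zc_zero]⟩
  symm := by
    rintro ⟨a, c, t⟩ ⟨a', c', t'⟩ ⟨m, k, h1, h2, h3⟩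
    dsimp only at h1 h2 h3
    subst h1 h2 h3
    refine ⟨-m, -k, ?_, ?_, ?_⟩
    · simp [zc_neg]
    · simp [zc_neg]
    · simp [zc_neg, dotProduct_add, coe_zc_dot_zc]
  trans := by
    rintro ⟨a, c, t⟩ ⟨a', c', t'⟩ ⟨a'', c'', t''⟩ ⟨m, k, h1, h2, h3⟩ ⟨m', k', h1', h2', h3'⟩
    dsimp only at h1 h2 h3 h1' h2' h3'
    subst h1 h2 h3 h1' h2' h3'
    refine ⟨m + m', k + k', ?_, ?_, ?_⟩
    · simp [zc_add, add_assoc]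
    · simp [zc_add, add_assoc]
    · simp [zc_add, dotProduct_add, add_dotProduct, coe_zc_dot_zc, add_assoc]

lemma mk3_eq_iff {n : ℕ} {a c a' c' : Fin n → ℝ} {t t' : Tc} :
    mk3 a c t = mk3 a' c' t' ↔ PoincareRel n (a, c, t) (a', c', t') :=
  (poincareRel_equivalence n).quot_mk_eq_iff _ _

/-- The product `[a + b, c, s + t]` does not depend on the representatives `(a, c, t)` and
`(b, c, s)` with common second coordinate. -/
lemma mk3_add_congr {n : ℕ} {a b c a' b' c' : Fin n → ℝ} {t s t' s' : Tc}
    (hp : mk3 a c t = mk3 a' c' t') (hq : mk3 b c s = mk3 b' c' s') :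
    mk3 (a + b) c (s + t) = mk3 (a' + b') c' (s' + t') := by
  rw [mk3_eq_iff] at hp hq ⊢
  obtain ⟨m, k, h1, h2, h3⟩ := hp
  obtain ⟨l, k', h1', -, h3'⟩ := hq
  dsimp only at h1 h2 h3 h1' h3'
  refine ⟨m + l, k, ?_, h2, ?_⟩
  · simp only [h1, h1', zc_add]
    abel
  · simp only [h3, h3', zc_add, add_dotProduct, AddCircle.coe_add]
    abel

lemma exists_rep {n : ℕ} (p : PB n) : ∃ a c t, p = mk3 a c t := by
  induction p using Quot.ind with
  | mk x => exact ⟨x.1, x.2.1, x.2.2, rfl⟩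

/-- A class has a representative over any prescribed real lift `c` of its second projection. -/
lemma exists_rep_of_proj2 {n : ℕ} (q : PB n) (c : Fin n → ℝ)
    (h : (fun i => ((c i : ℝ) : Tc)) = proj2 q) : ∃ b s, q = mk3 b c s := by
  obtain ⟨b, d, s, rfl⟩ := exists_rep q
  have h' : ∀ i, ∃ k : ℤ, c i = d i + (k : ℝ) := by
    intro i
    have hi : ((c i : ℝ) : Tc) = ((d i : ℝ) : Tc) := congrFun h i
    have h0 : ((c i - d i : ℝ) : Tc) = 0 := by
      rw [AddCircle.coe_sub, hi, sub_self]
    obtain ⟨k, hk⟩ := (AddCircle.coe_eq_zero_iff (1 : ℝ)).mp h0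
    refine ⟨k, ?_⟩
    rw [zsmul_eq_mul, mul_one] at hk
    linarith
  choose k hk using h'
  refine ⟨b, s, mk3_eq_iff.mpr ⟨0, k, ?_, ?_, ?_⟩⟩
  · simp [zc_zero]
  · funext i
    exact hk i
  · simp [zc_zero]

lemma exists_common_rep {n : ℕ} (p q : PB n) (h : proj2 p = proj2 q) :
    ∃ a b c t s, p = mk3 a c t ∧ q = mk3 b c s := by
  obtain ⟨a, c, t, rfl⟩ := exists_rep p
  obtain ⟨b, s, hq⟩ := exists_rep_of_proj2 q c h
  exact ⟨a, b, c, t, s, rfl, hq⟩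

lemma exists_isPhiL (n : ℕ) :
    ∃ Phi : (p : PB n) → (q : PB n) → proj2 p = proj2 q → PB n, IsPhiL n Phi := by
  choose fa fb fc ft fs hp hq using @exists_common_rep n
  refine ⟨fun p q h => mk3 (fa p q h + fb p q h) (fc p q h) (fs p q h + ft p q h), ?_⟩
  intro a b c t s h
  exact (mk3_add_congr (hp _ _ h) (hq _ _ h)).symm

lemma PBadd_mk3 {n : ℕ} (a c : Fin n → ℝ) (t z : Tc) :
    PBadd (mk3 a c t) z = mk3 a c (t + z) := rfl

/-- **left bilinearity of the Poincaré bundle.**  There is a unique map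
`Φ_l` on pairs with `π₂(p) = π₂(q)` with `Φ_l([a,c,t],[b,c,s]) = [a+b,c,s+t]`; it satisfies
`π₁(Φ_l(p,q)) = π₁(p) + π₁(q)`, `π₂(Φ_l(p,q)) = π₂(p)`, the balancing relations
`Φ_l(p+z, q) = Φ_l(p,q) + z = Φ_l(p, q+z)`, and associativity. -/
theorem statement11 (n : ℕ) :
    (∃! Phi : (p : PB n) → (q : PB n) → proj2 p = proj2 q → PB n, IsPhiL n Phi) ∧
    (∀ Phi : (p : PB n) → (q : PB n) → proj2 p = proj2 q → PB n, IsPhiL n Phi →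
      (∀ (p q : PB n) (h : proj2 p = proj2 q),
        proj1 (Phi p q h) = proj1 p + proj1 q) ∧
      (∀ (p q : PB n) (h : proj2 p = proj2 q),
        proj2 (Phi p q h) = proj2 p) ∧
      (∀ (p q : PB n) (h : proj2 p = proj2 q) (z : Tc)
        (h₁ : proj2 (PBadd p z) = proj2 q) (h₂ : proj2 p = proj2 (PBadd q z)),
        Phi (PBadd p z) q h₁ = PBadd (Phi p q h) z ∧
        Phi p (PBadd q z) h₂ = PBadd (Phi p q h) z) ∧
      (∀ (p q r : PB n) (hpq : proj2 p = proj2 q) (hqr : proj2 q = proj2 r)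
        (h₁ : proj2 (Phi p q hpq) = proj2 r) (h₂ : proj2 p = proj2 (Phi q r hqr)),
        Phi (Phi p q hpq) r h₁ = Phi p (Phi q r hqr) h₂)) := by
  refine ⟨?_, fun Phi hPhi => ⟨?_, ?_, ?_, ?_⟩⟩
  · obtain ⟨Phi, hPhi⟩ := exists_isPhiL n
    refine ⟨Phi, hPhi, fun Psi hPsi => ?_⟩
    funext p q h
    obtain ⟨a, b, c, t, s, rfl, rfl⟩ := exists_common_rep p q h
    rw [hPhi, hPsi]
  · intro p q h
    obtain ⟨a, b, c, t, s, rfl, rfl⟩ := exists_common_rep p q h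
    rw [hPhi]
    funext i
    exact AddCircle.coe_add 1 (a i) (b i)
  · intro p q h
    obtain ⟨a, b, c, t, s, rfl, rfl⟩ := exists_common_rep p q h
    rw [hPhi]
    rfl
  · intro p q h z h₁ h₂
    obtain ⟨a, b, c, t, s, rfl, rfl⟩ := exists_common_rep p q h
    simp only [PBadd_mk3] at h₁ h₂ ⊢
    rw [hPhi, hPhi, hPhi, PBadd_mk3]
    exact ⟨by rw [add_assoc], by rw [add_right_comm]⟩
  · intro p q r hpq hqr h₁ h₂
    obtain ⟨a, b, c, t, s, rfl, rfl⟩ := exists_common_rep p q hpq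
    obtain ⟨d, u, rfl⟩ := exists_rep_of_proj2 r c hqr
    -- The types of `h₁` and `h₂` mention the inner products, so these are reverted for the rewrite.
    revert h₁ h₂
    rw [hPhi a b c t s hpq, hPhi b d c s u hqr]
    intro h₁ h₂
    rw [hPhi, hPhi]
    rw [add_assoc, add_assoc]
end
end

section
/- From TD-cocycles to T-duality cocycles (the Čech cocycle condition): let n : ℕ; let a_ij, a_jk, a_kl, a_ik, a_il, a_jl ∈ ℝⁿ, â_ij, â_jk, â_kl, â_ik, â_il, â_jl ∈ ℝⁿ, m_ijk, m_ijl, m_ikl, m_jkl ∈ ℤⁿ, m̂_ijk, m̂_ijl, m̂_ikl, m̂_jkl ∈ ℤⁿ and t_ijk, t_ijl, t_ikl, t_jkl ∈ T. Assume the cocycle conditions a_ik = m_ijk + a_ij + a_jk, a_il = m_ijl + a_ij + a_jl, a_il = m_ikl + a_ik + a_kl, a_jl = m_jkl + a_jk + a_kl, the corresponding four conditions for the â's with the m̂'s, and the TD-cocycle condition t_ikl + t_ijk − ↑(m_ijk⋅â_kl) = t_ijl + t_jkl. For each triple αβγ among ijk, ijl, ikl, jkl define c_αβγ : Tⁿ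 → T by c_αβγ(a) := −t_αβγ − ⟪m̂_αβγ, a⟫ + ↑(a_αβ⋅â_βγ). Then for all a ∈ Tⁿ: c_jkl(a + ↑a_ij) + c_ijl(a) = c_ijk(a) + c_ikl(a), where ↑a_ij ∈ Tⁿ is the componentwise reduction of a_ij. -/
/-!
Both sides are expanded by bilinearity of the pairings. Substituting the cocycle conditions for
`âjl` and `aik`, the term `⟪m̂jkl, ↑aij⟫ = ↑(m̂jkl⋅aij)` produced by the shift on the left cancels
against part of `↑(aij⋅âjl)`, and the term `↑(mijk⋅âkl)` on the right is the correction in the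
cocycle condition for `t`. The terms depending on `a` agree because the two ways of expanding `âil`
give `m̂jkl + m̂ijl = m̂ijk + m̂ikl` in `ℤⁿ`.
-/

open Matrix

noncomputable section

/-- The pairing `⟪m, a⟫ := ∑ i, mᵢ • aᵢ ∈ T` of `m ∈ ℤⁿ` with `a ∈ Tⁿ`. -/
def zpair {n : ℕ} (m : Fin n → ℤ) (a : Fin n → Tc) : Tc := ∑ i, m i • a i

/-- Componentwise reduction `ℝⁿ → Tⁿ`. -/
def tcv {n : ℕ} (v : Fin n → ℝ) : Fin n → Tc := fun i => (v i : Tc)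

lemma zpair_add_right {n : ℕ} (m : Fin n → ℤ) (a b : Fin n → Tc) :
    zpair m (a + b) = zpair m a + zpair m b := by
  simp [zpair, smul_add, Finset.sum_add_distrib]

lemma zpair_add_left {n : ℕ} (m m' : Fin n → ℤ) (a : Fin n → Tc) :
    zpair (m + m') a = zpair m a + zpair m' a := by
  simp [zpair, add_smul, Finset.sum_add_distrib]

lemma zpair_tcv {n : ℕ} (m : Fin n → ℤ) (v : Fin n → ℝ) :
    zpair m (tcv v) = ((dotProduct v (zc m) : ℝ) : Tc) := by
  have h : ((dotProduct v (zc m) : ℝ) : Tc) = ∑ i, ((v i * (m i : ℝ) : ℝ) : Tc) :=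
    map_sum (QuotientAddGroup.mk' (AddSubgroup.zmultiples (1 : ℝ))) _ _
  rw [h]
  refine Finset.sum_congr rfl fun i _ => ?_
  rw [mul_comm, ← zsmul_eq_mul, AddCircle.coe_zsmul]
  rfl

/-- **from TD-cocycles to T-duality cocycles: the Čech cocycle condition.**
Given a TD-cocycle `(a, â, m, m̂, t)`, the functions
`c_αβγ(a) := −t_αβγ − ⟪m̂_αβγ, a⟫ + ↑(a_αβ⋅â_βγ)` satisfy the Čech cocycle condition
`c_jkl(a + ↑a_ij) + c_ijl(a) = c_ijk(a) + c_ikl(a)`. -/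
theorem statement17 (n : ℕ)
    (aij ajk akl aik ail ajl ahatij ahatjk ahatkl ahatik ahatil ahatjl : Fin n → ℝ)
    (mijk mijl mikl mjkl mhatijk mhatijl mhatikl mhatjkl : Fin n → ℤ)
    (tijk tijl tikl tjkl : Tc)
    (h1 : aik = zc mijk + aij + ajk)
    (h2 : ail = zc mijl + aij + ajl)
    (h3 : ail = zc mikl + aik + akl)
    (h4 : ajl = zc mjkl + ajk + akl)
    (hh1 : ahatik = zc mhatijk + ahatij + ahatjk)
    (hh2 : ahatil = zc mhatijl + ahatij + ahatjl)
    (hh3 : ahatil = zc mhatikl + ahatik + ahatkl)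
    (hh4 : ahatjl = zc mhatjkl + ahatjk + ahatkl)
    (hT : tikl + tijk - ((dotProduct (zc mijk) ahatkl : ℝ) : Tc) = tijl + tjkl) :
    ∀ a : Fin n → Tc,
      (-tjkl - zpair mhatjkl (a + tcv aij) + ((dotProduct ajk ahatkl : ℝ) : Tc)) +
          (-tijl - zpair mhatijl a + ((dotProduct aij ahatjl : ℝ) : Tc)) =
        (-tijk - zpair mhatijk a + ((dotProduct aij ahatjk : ℝ) : Tc)) +
          (-tikl - zpair mhatikl a + ((dotProduct aik ahatkl : ℝ) : Tc)) := by
  intro a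
  have hm : mhatjkl + mhatijl = mhatijk + mhatikl := by
    funext i
    have e : ((mhatjkl i : ℝ) + mhatijl i) = mhatijk i + mhatikl i := by
      have e1 := congrFun hh1 i
      have e2 := congrFun hh2 i
      have e3 := congrFun hh3 i
      have e4 := congrFun hh4 i
      simp only [Pi.add_apply, zc] at e1 e2 e3 e4
      linarith
    exact_mod_cast e
  have hp : zpair mhatjkl a + zpair mhatijl a = zpair mhatijk a + zpair mhatikl a := by
    rw [← zpair_add_left, hm, zpair_add_left]
  rw [zpair_add_right, zpair_tcv, hh4, h1]
  simp only [dotProduct_add, add_dotProduct, AddCircle.coe_add]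
  linear_combination (norm := abel) hT - hp
end
end
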